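/- arXiv:1907.07204 — 2 statements merged into one kernel-verified Lean document; each statement's English description precedes it below -/
import Mathlib

section
/- If each of the functions f₁,…,fₙ : ℂ → ℂ is complex differentiable at 0, then the hyper-Lambert forward map z ↦ G(f₁,…,fₙ; z) has complex derivative F (n+1) 0 at the point 0, and this derivative is nonzero. -/
/-!
The tower is differentiable at `0` by induction on its height, since each level is `exp` of a
product of functions differentiable at `0`. The product rule for `z * hwF f (n + 1) z` at `z = 0`
then leaves only the term `hwF f (n + 1) 0`, because the other one carries the factor `z`. This
value is either `1` or an exponential, hence nonzero.
-/

/-- The hyper-Lambert tower: `hwF f 1 z = 1` and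
`hwF f (k+1) z = exp (f k z * hwF f k z)` for `k ≥ 1`. -/
noncomputable def hwF (f : ℕ → ℂ → ℂ) : ℕ → ℂ → ℂ
  | 0, _ => 1
  | 1, _ => 1
  | (k + 2), z => Complex.exp (f (k + 1) z * hwF f (k + 1) z)

/-- The hyper-Lambert forward map `G(f₁,…,fₙ; z) = z * hwF f (n+1) z`. -/
noncomputable def hwG (f : ℕ → ℂ → ℂ) (n : ℕ) (z : ℂ) : ℂ :=
  z * hwF f (n + 1) z

theorem hwF_differentiableAt_zero (n : ℕ) (f : ℕ → ℂ → ℂ)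
    (hf : ∀ k : ℕ, 1 ≤ k → k ≤ n → DifferentiableAt ℂ (f k) 0) :
    DifferentiableAt ℂ (hwF f (n + 1)) 0 := by
  induction n with
  | zero => exact differentiableAt_const (1 : ℂ)
  | succ m ih =>
    have h := ih fun k h1 hk => hf k h1 (hk.trans m.le_succ)
    exact ((hf (m + 1) (Nat.le_add_left 1 m) le_rfl).mul h).cexp

theorem hwF_succ_ne_zero (f : ℕ → ℂ → ℂ) (n : ℕ) (z : ℂ) : hwF f (n + 1) z ≠ 0 := by
  cases n with
  | zero => exact one_ne_zero
  | succ m => exact Complex.exp_ne_zero _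

/-- If each of `f₁, …, fₙ : ℂ → ℂ` is complex differentiable at `0`, then the
hyper-Lambert forward map `z ↦ G(f₁,…,fₙ; z)` has complex derivative
`hwF f (n+1) 0` at the point `0`, and this derivative is nonzero. -/
theorem hwG_hasDerivAt_zero (n : ℕ) (f : ℕ → ℂ → ℂ)
    (hf : ∀ k : ℕ, 1 ≤ k → k ≤ n → DifferentiableAt ℂ (f k) 0) :
    HasDerivAt (hwG f n) (hwF f (n + 1) 0) 0 ∧ hwF f (n + 1) 0 ≠ 0 := by
  refine ⟨?_, hwF_succ_ne_zero f n 0⟩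
  have h := (hasDerivAt_id (0 : ℂ)).mul (hwF_differentiableAt_zero n f hf).hasDerivAt
  simp only [id, one_mul, zero_mul, add_zero] at h
  exact h
end

section
/- If each of the functions f₁,…,fₙ : ℂ → ℂ is analytic at 0, then the hyper-Lambert forward map g(z) = G(f₁,…,fₙ; z) admits a local inverse at 0: there exists a function h : ℂ → ℂ analytic at 0 with h 0 = 0, such that g (h y) = y for all y in some neighborhood of 0 and h (g z) = z for all z in some neighborhood of 0. (This is the existence of the hyper-Lambert map HW(f₁,…,fₙ; ·) near the origin, which the paper attributes to the Lagrange Inversion Theorem.) -/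
/-!
The map `g(z) = z * F (n+1) z` is analytic at `0`, because the tower `F` is built from the
analytic `fₖ` by products and exponentials (`analyticAt_hwF`). By the product rule
`g'(0) = F (n+1) 0`, which is nonzero since every level of the tower is `1` or a value of the
exponential (`hwF_ne_zero`). As `g 0 = 0`, the analytic inverse function theorem supplies the
local inverse.
-/

open Filter

lemma hwF_ne_zero (f : ℕ → ℂ → ℂ) (k : ℕ) (z : ℂ) : hwF f k z ≠ 0 := by
  match k with
  | 0 => simp [hwF]
  | 1 => simp [hwF]
  | k + 2 => simp [hwF]

lemma analyticAt_hwF {n : ℕ} {f : ℕ → ℂ → ℂ} {a : ℂ}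
    (hf : ∀ k : ℕ, 1 ≤ k → k ≤ n → AnalyticAt ℂ (f k) a) (k : ℕ) (hk : k ≤ n) :
    AnalyticAt ℂ (hwF f (k + 1)) a := by
  induction k with
  | zero => exact analyticAt_const (v := (1 : ℂ))
  | succ k ih => exact ((hf (k + 1) (by lia) hk).mul (ih (by lia))).cexp

/-- If each of `f₁, …, fₙ : ℂ → ℂ` is analytic at `0`, then the hyper-Lambert
forward map `g(z) = G(f₁,…,fₙ; z)` admits a local analytic inverse at `0`:
there is `h : ℂ → ℂ` analytic at `0` with `h 0 = 0`, `g (h y) = y` for all `y`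
near `0` and `h (g z) = z` for all `z` near `0`.  This is the existence of the
hyper-Lambert map `HW(f₁,…,fₙ; ·)` near the origin. -/
theorem hwG_local_inverse (n : ℕ) (f : ℕ → ℂ → ℂ)
    (hf : ∀ k : ℕ, 1 ≤ k → k ≤ n → AnalyticAt ℂ (f k) 0) :
    ∃ h : ℂ → ℂ, AnalyticAt ℂ h 0 ∧ h 0 = 0 ∧
      (∀ᶠ y in nhds (0 : ℂ), hwG f n (h y) = y) ∧
      (∀ᶠ z in nhds (0 : ℂ), h (hwG f n z) = z) := by
  have hF : AnalyticAt ℂ (hwF f (n + 1)) 0 := analyticAt_hwF hf n le_rfl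
  have hg : AnalyticAt ℂ (hwG f n) 0 := analyticAt_id.mul hF
  have hg0 : hwG f n 0 = 0 := zero_mul _
  have hd : HasDerivAt (hwG f n) (hwF f (n + 1) 0) 0 := by
    have h : HasDerivAt (hwG f n)
        (1 * hwF f (n + 1) 0 + 0 * deriv (hwF f (n + 1)) 0) 0 :=
      (hasDerivAt_id (0 : ℂ)).mul hF.differentiableAt.hasDerivAt
    simpa using h
  have hg' : deriv (hwG f n) 0 ≠ 0 := hd.deriv ▸ hwF_ne_zero f (n + 1) 0
  have hs := hg.hasStrictDerivAt.hasStrictFDerivAt_equiv hg'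
  refine ⟨hg.hasStrictDerivAt.localInverse _ _ _ hg', ?_, ?_, ?_, ?_⟩
  · simpa only [hg0] using hg.analyticAt_localInverse hg'
  · simpa only [hg0] using hs.localInverse_apply_image
  · simpa only [hg0] using hs.eventually_right_inverse
  · exact hs.eventually_left_inverse
end
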